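/- Let n ≥ 2. There exists a constant C > 0 such that for all t > 0, all indices j,k ∈ {1,…,n}, all multi-indices β ∈ ℕⁿ with |β| ≤ 1, and all x ∈ ℝⁿ, the Oseen kernel K_t is C¹ and satisfies |∂^β K_t^{jk}(x)| ≤ C t^{−(n+|β|)/2} (1 + t^{−1/2}|x|)^{−n−|β|}. -/

import Mathlib

open MeasureTheory Real ENNReal
open scoped ENNReal NNReal FourierTransform RealInnerProductSpace

noncomputable section

/-- `ℝⁿ` with the Euclidean norm. -/
abbrev Rn (n : ℕ) := EuclideanSpace ℝ (Fin n)
/-- `ℂⁿ` with the Euclidean norm. -/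
abbrev Cn (n : ℕ) := EuclideanSpace ℂ (Fin n)
/-- `ℂⁿ ⊗ ℂⁿ` (i.e. `n × n` complex matrices) with the Frobenius norm. -/
abbrev Mn (n : ℕ) := EuclideanSpace ℂ (Fin n × Fin n)

instance (n : ℕ) : MeasurableSpace (Cn n) := borel _
instance (n : ℕ) : BorelSpace (Cn n) := ⟨rfl⟩
instance (n : ℕ) : MeasurableSpace (Mn n) := borel _
instance (n : ℕ) : BorelSpace (Mn n) := ⟨rfl⟩

/-- The Gaussian heat kernel `h_t(x) = (4πt)^{-n/2} exp(-|x|²/(4t))`. -/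
def heatKernel (n : ℕ) (t : ℝ) (x : Rn n) : ℝ :=
  (4 * π * t) ^ (-(n : ℝ) / 2) * Real.exp (-‖x‖ ^ 2 / (4 * t))

/-- The Oseen kernel
`K_t^{jk}(x) = ∫_{ℝⁿ} (δ_{jk} - ξ_jξ_k/|ξ|²) e^{-4π²t|ξ|²} e^{2πi x·ξ} dξ`;
convolution with `K_t` realizes `e^{tΔ}ℙ`, with `ℙ` the Leray projection. -/
def oseenKernel (n : ℕ) (t : ℝ) (j k : Fin n) (x : Rn n) : ℂ :=
  ∫ ξ : Rn n,
    (((if j = k then 1 else 0) - ξ j * ξ k / ‖ξ‖ ^ 2 : ℝ) : ℂ) *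
      Complex.exp (-(4 * π ^ 2 * t * ‖ξ‖ ^ 2) : ℝ) *
      Complex.exp (2 * π * Complex.I * (⟪x, ξ⟫ : ℝ))

/-- The partial derivative `∂_l f` of a function `f : ℝⁿ → ℂ`. -/
def pdiff {n : ℕ} (l : Fin n) (f : Rn n → ℂ) (x : Rn n) : ℂ :=
  fderiv ℝ f x (EuclideanSpace.single l 1)

/-!
The symbol of `K_t` is `|ξ|⁻² Q(ξ) e^{-4π²t|ξ|²}`, where `Q(ξ) = δ_{jk}|ξ|² - ξ_j ξ_k` is a
polynomial, so only the factor `|ξ|⁻²` is singular. Writing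
`|ξ|⁻² e^{-4π²t|ξ|²} = 4π² ∫_t^∞ e^{-4π²s|ξ|²} ds` gives `K_t = 4π² ∫_t^∞ 𝓕⁻¹[Q e^{-4π²s|ξ|²}] ds`.
For a smooth homogeneous symbol `Q` of degree `m` the inner kernel is `s^{-(n+m)/2} Φ(x/√s)` with
`Φ` a Schwartz function, hence at most `C (√s + |x|)^{-(n+m)}`, and the integral over `s > t` costs
two powers. For `m = 2` this is `|K_t(x)| ≤ C (√t + |x|)⁻ⁿ`; a derivative multiplies the symbol by
`2πi ξ_l`, which raises the degree, and therefore the decay, by one.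
-/

open Filter Set Module
open scoped SchwartzMap Topology

theorem exists_norm_iteratedFDeriv_exp_le {E : Type*} [NormedAddCommGroup E] [NormedSpace ℝ E]
    {f : E → ℝ} (hf : f.HasTemperateGrowth) (N : ℕ) :
    ∃ (k : ℕ) (C : ℝ), 0 ≤ C ∧ ∀ x,
      ‖iteratedFDeriv ℝ N (fun y => Real.exp (f y)) x‖ ≤ C * (1 + ‖x‖) ^ k * Real.exp (f x) := by
  obtain ⟨k, C, hC, hf_le⟩ := hf.norm_iteratedFDeriv_le_uniform N
  refine ⟨k * N, N.factorial * (C + 1) ^ N, by positivity, fun x => ?_⟩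
  set D : ℝ := (C + 1) * (1 + ‖x‖) ^ k
  have one_le_D : 1 ≤ D :=
    one_le_mul_of_one_le_of_one_le (by linarith) (one_le_pow₀ (by linarith [norm_nonneg x]))
  have hexp : ∀ i ≤ N, ‖iteratedFDeriv ℝ i Real.exp (f x)‖ ≤ Real.exp (f x) := fun i _ => by
    rw [norm_iteratedFDeriv_eq_norm_iteratedDeriv, iteratedDeriv_eq_iterate, Real.iter_deriv_exp,
      Real.norm_of_nonneg (Real.exp_nonneg _)]
  have hf_pow : ∀ i, 1 ≤ i → i ≤ N → ‖iteratedFDeriv ℝ i f x‖ ≤ D ^ i := fun i hi hiN =>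
    calc ‖iteratedFDeriv ℝ i f x‖ ≤ C * (1 + ‖x‖) ^ k := hf_le i hiN x
      _ ≤ D := mul_le_mul_of_nonneg_right (by linarith) (by positivity)
      _ ≤ D ^ i := le_self_pow₀ one_le_D (by lia)
  calc ‖iteratedFDeriv ℝ N (fun y => Real.exp (f y)) x‖
      ≤ N.factorial * Real.exp (f x) * D ^ N :=
        norm_iteratedFDeriv_comp_le Real.contDiff_exp (hf.1.of_le (by exact_mod_cast le_top))
          le_rfl x hexp hf_pow
    _ = _ := by rw [mul_pow, ← pow_mul]; ring

theorem exists_one_add_pow_mul_exp_neg_mul_sq_le (k : ℕ) {b : ℝ} (hb : 0 < b) :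
    ∃ C, ∀ r : ℝ, 0 ≤ r → (1 + r) ^ k * Real.exp (-(b * r ^ 2)) ≤ C := by
  refine ⟨k.factorial * Real.exp (1 + 1 / (4 * b)), fun r hr => ?_⟩
  have hpow : (1 + r) ^ k ≤ k.factorial * Real.exp (1 + r) :=
    (div_le_iff₀' (by positivity)).1 (Real.pow_div_factorial_le_exp (1 + r) (by linarith) k)
  have hsq : r - b * r ^ 2 ≤ 1 / (4 * b) := by
    have : 1 / (4 * b) - (r - b * r ^ 2) = b * (r - 1 / (2 * b)) ^ 2 := by field_simp; ring
    linarith [mul_nonneg hb.le (sq_nonneg (r - 1 / (2 * b)))]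
  calc (1 + r) ^ k * Real.exp (-(b * r ^ 2))
      ≤ k.factorial * Real.exp (1 + r) * Real.exp (-(b * r ^ 2)) := by gcongr
    _ = k.factorial * Real.exp (1 + (r - b * r ^ 2)) := by
        rw [mul_assoc, ← Real.exp_add]; ring_nf
    _ ≤ k.factorial * Real.exp (1 + 1 / (4 * b)) := by gcongr

section Gaussian

variable {V : Type*} [NormedAddCommGroup V] [InnerProductSpace ℝ V] {b : ℝ}

theorem exists_norm_pow_mul_iteratedFDeriv_gaussian_le (hb : 0 < b) (k N : ℕ) :
    ∃ C, ∀ x : V,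
      ‖x‖ ^ k * ‖iteratedFDeriv ℝ N (fun ξ : V => Real.exp (-(b * ‖ξ‖ ^ 2))) x‖ ≤ C := by
  have hquad : (fun ξ : V => -(b * ‖ξ‖ ^ 2)).HasTemperateGrowth :=
    ((Function.HasTemperateGrowth.const b).mul (Function.hasTemperateGrowth_norm_sq V)).neg
  obtain ⟨m, A, hA, hderiv⟩ := exists_norm_iteratedFDeriv_exp_le hquad N
  obtain ⟨C, hC⟩ := exists_one_add_pow_mul_exp_neg_mul_sq_le (k + m) hb
  refine ⟨A * C, fun x => ?_⟩
  calc ‖x‖ ^ k * ‖iteratedFDeriv ℝ N (fun ξ : V => Real.exp (-(b * ‖ξ‖ ^ 2))) x‖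
      ≤ (1 + ‖x‖) ^ k * (A * (1 + ‖x‖) ^ m * Real.exp (-(b * ‖x‖ ^ 2))) := by
        gcongr
        · linarith
        · exact hderiv x
    _ = A * ((1 + ‖x‖) ^ (k + m) * Real.exp (-(b * ‖x‖ ^ 2))) := by ring
    _ ≤ A * C := by gcongr; exact hC _ (norm_nonneg x)

variable (V) in
/-- The Gaussian `ξ ↦ exp (-b |ξ|²)`, `b > 0`, as a Schwartz function. -/
def gaussianSchwartz (hb : 0 < b) : 𝓢(V, ℝ) where
  toFun ξ := Real.exp (-(b * ‖ξ‖ ^ 2))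
  smooth' := Real.contDiff_exp.comp (contDiff_const.mul (contDiff_norm_sq ℝ)).neg
  decay' := exists_norm_pow_mul_iteratedFDeriv_gaussian_le hb

@[simp]
theorem gaussianSchwartz_apply (hb : 0 < b) (ξ : V) :
    gaussianSchwartz V hb ξ = Real.exp (-(b * ‖ξ‖ ^ 2)) := rfl

theorem integrable_norm_pow_mul_gaussian [FiniteDimensional ℝ V] [MeasurableSpace V]
    [BorelSpace V] (hb : 0 < b) (k : ℕ) :
    Integrable fun ξ : V => ‖ξ‖ ^ k * Real.exp (-(b * ‖ξ‖ ^ 2)) := by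
  simpa using (gaussianSchwartz V hb).integrable_pow_mul volume k

end Gaussian

/-- `P` is a smooth positively homogeneous symbol of degree `m`. The case `r = 0` of homogeneity,
which follows by continuity from `r > 0`, is built in. -/
structure IsHomogeneousSymbol {V E : Type*} [NormedAddCommGroup V] [NormedSpace ℝ V]
    [NormedAddCommGroup E] [NormedSpace ℝ E] (P : V → E) (m : ℕ) : Prop where
  hasTemperateGrowth : P.HasTemperateGrowth
  map_smul : ∀ r : ℝ, 0 ≤ r → ∀ ξ, P (r • ξ) = r ^ m • P ξ

namespace IsHomogeneousSymbol

variable {V E F : Type*} [NormedAddCommGroup E] [NormedSpace ℝ E] [NormedAddCommGroup F]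
  [NormedSpace ℝ F] {m k : ℕ}

section NormedSpace

variable [NormedAddCommGroup V] [NormedSpace ℝ V] {P Q : V → E}

protected theorem continuous (hP : IsHomogeneousSymbol P m) : Continuous P :=
  hP.hasTemperateGrowth.1.continuous

theorem exists_norm_le [ProperSpace V] (hP : IsHomogeneousSymbol P m) :
    ∃ A, ∀ ξ, ‖P ξ‖ ≤ A * ‖ξ‖ ^ m := by
  obtain ⟨A, hA⟩ := (isCompact_closedBall (0 : V) 1).exists_bound_of_continuousOn
    hP.continuous.continuousOn
  refine ⟨A, fun ξ => ?_⟩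
  have hunit : ‖ξ‖⁻¹ • ξ ∈ Metric.closedBall (0 : V) 1 := by
    rw [mem_closedBall_zero_iff, norm_smul, norm_inv, norm_norm]
    exact inv_mul_le_one
  have hpolar : ‖ξ‖ • ‖ξ‖⁻¹ • ξ = ξ := by
    rcases eq_or_ne ξ 0 with rfl | hξ
    · simp
    · exact smul_inv_smul₀ (norm_ne_zero_iff.2 hξ) ξ
  calc ‖P ξ‖ = ‖ξ‖ ^ m * ‖P (‖ξ‖⁻¹ • ξ)‖ := by
        rw [← norm_norm ξ, ← norm_pow, ← norm_smul, norm_norm, ← hP.map_smul _ (norm_nonneg ξ),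
          hpolar]
    _ ≤ A * ‖ξ‖ ^ m := by rw [mul_comm]; gcongr; exact hA _ hunit

protected theorem clm (L : V →L[ℝ] E) : IsHomogeneousSymbol L 1 :=
  ⟨L.hasTemperateGrowth, fun r _ ξ => by simp⟩

theorem clm_comp (L : E →L[ℝ] F) (hP : IsHomogeneousSymbol P m) :
    IsHomogeneousSymbol (fun ξ => L (P ξ)) m :=
  ⟨L.hasTemperateGrowth.comp hP.hasTemperateGrowth,
    fun r hr ξ => by simp only [hP.map_smul r hr, L.map_smul]⟩

protected theorem sub (hP : IsHomogeneousSymbol P m) (hQ : IsHomogeneousSymbol Q m) :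
    IsHomogeneousSymbol (fun ξ => P ξ - Q ξ) m :=
  ⟨hP.hasTemperateGrowth.sub hQ.hasTemperateGrowth, fun r hr ξ => by
    simp only [hP.map_smul r hr, hQ.map_smul r hr, smul_sub]⟩

protected theorem smul {f : V → ℝ} (hf : IsHomogeneousSymbol f k) (hP : IsHomogeneousSymbol P m) :
    IsHomogeneousSymbol (fun ξ => f ξ • P ξ) (k + m) :=
  ⟨hf.hasTemperateGrowth.smul hP.hasTemperateGrowth, fun r hr ξ => by
    simp only [hf.map_smul r hr, hP.map_smul r hr, smul_eq_mul, smul_smul]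
    ring_nf⟩

end NormedSpace

theorem norm_sq [NormedAddCommGroup V] [InnerProductSpace ℝ V] :
    IsHomogeneousSymbol (fun ξ : V => ‖ξ‖ ^ 2) 2 :=
  ⟨Function.hasTemperateGrowth_norm_sq V, fun r _ ξ => by
    rw [norm_smul, mul_pow, norm_eq_abs, sq_abs, smul_eq_mul]⟩

end IsHomogeneousSymbol

section FourierInv

variable {V E : Type*} [NormedAddCommGroup V] [InnerProductSpace ℝ V] [FiniteDimensional ℝ V]
  [MeasurableSpace V] [BorelSpace V] [NormedAddCommGroup E] [NormedSpace ℂ E] {f : V → E}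

theorem contDiff_fourierInv {N : ℕ∞}
    (hf : ∀ k : ℕ, k ≤ N → Integrable fun v => ‖v‖ ^ k * ‖f v‖) : ContDiff ℝ N (𝓕⁻ f) := by
  rw [funext (fourierInv_eq_fourier_neg f)]
  exact (contDiff_fourier hf).comp contDiff_neg

theorem fderiv_fourierInv_apply (hf : Integrable f) (hf' : Integrable fun v => ‖v‖ * ‖f v‖)
    (x v : V) :
    fderiv ℝ (𝓕⁻ f) x v = (2 * π * Complex.I) • 𝓕⁻ (fun ξ => ⟪v, ξ⟫ • f ξ) x := by
  let L : V →L[ℝ] V →L[ℝ] ℝ := -innerSL ℝ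
  have hint : Integrable (VectorFourier.fourierSMulRight L f) :=
    (hf'.const_mul (2 * π * ‖L‖)).mono' hf.1.fourierSMulRight (Eventually.of_forall fun ξ => by
      rw [← mul_assoc]; exact VectorFourier.norm_fourierSMulRight_le L f ξ)
  have hderiv : fderiv ℝ (𝓕⁻ f) x v = 𝓕⁻ (fun ξ => VectorFourier.fourierSMulRight L f ξ v) x :=
    (DFunLike.congr_fun (congrFun (VectorFourier.fderiv_fourierIntegral L hf hf') x) v).trans
      (fourierIntegral_continuousLinearMap_apply' (L := L) hint)
  rw [hderiv, fourierInv_eq, fourierInv_eq, ← integral_smul]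
  congr with ξ
  simp only [VectorFourier.fourierSMulRight_apply, L, neg_apply, neg_smul, smul_neg, neg_neg]
  rw [smul_comm, innerSL_apply_apply ℝ, real_inner_comm v ξ]

end FourierInv

section GaussianDecay

variable {V E : Type*} [NormedAddCommGroup V] [InnerProductSpace ℝ V] [FiniteDimensional ℝ V]
  [MeasurableSpace V] [BorelSpace V] [NormedAddCommGroup E] [NormedSpace ℝ E]
  {P : V → E} {A b : ℝ} {m : ℕ}

theorem integrable_norm_pow_mul_norm_gaussian_smul (hb : 0 < b)
    (hPm : AEStronglyMeasurable P) (hP : ∀ ξ, ‖P ξ‖ ≤ A * ‖ξ‖ ^ m) (k : ℕ) :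
    Integrable fun ξ => ‖ξ‖ ^ k * ‖Real.exp (-(b * ‖ξ‖ ^ 2)) • P ξ‖ := by
  have hexp : Continuous fun ξ : V => Real.exp (-(b * ‖ξ‖ ^ 2)) := by fun_prop
  refine ((integrable_norm_pow_mul_gaussian hb (k + m)).const_mul A).mono'
    ((continuous_norm.pow k).aestronglyMeasurable.mul
      (hexp.aestronglyMeasurable.smul hPm).norm) (Eventually.of_forall fun ξ => ?_)
  rw [norm_of_nonneg (by positivity), norm_smul, norm_of_nonneg (Real.exp_nonneg _)]
  calc ‖ξ‖ ^ k * (Real.exp (-(b * ‖ξ‖ ^ 2)) * ‖P ξ‖)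
      ≤ ‖ξ‖ ^ k * (Real.exp (-(b * ‖ξ‖ ^ 2)) * (A * ‖ξ‖ ^ m)) := by gcongr; exact hP ξ
    _ = A * (‖ξ‖ ^ (k + m) * Real.exp (-(b * ‖ξ‖ ^ 2))) := by ring

theorem integrable_gaussian_smul (hb : 0 < b) (hPm : AEStronglyMeasurable P)
    (hP : ∀ ξ, ‖P ξ‖ ≤ A * ‖ξ‖ ^ m) :
    Integrable fun ξ => Real.exp (-(b * ‖ξ‖ ^ 2)) • P ξ := by
  have hexp : Continuous fun ξ : V => Real.exp (-(b * ‖ξ‖ ^ 2)) := by fun_prop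
  exact (integrable_norm_iff (hexp.aestronglyMeasurable.smul hPm)).1
    (by simpa using integrable_norm_pow_mul_norm_gaussian_smul hb hPm hP 0)

end GaussianDecay

section HeatMultiplierKernel

variable {V E : Type*} [NormedAddCommGroup V] [InnerProductSpace ℝ V] [FiniteDimensional ℝ V]
  [MeasurableSpace V] [BorelSpace V] [NormedAddCommGroup E] [NormedSpace ℂ E]
  {P : V → E} {A t : ℝ} {m : ℕ}

/-- The convolution kernel of the operator `e^{tΔ} P(D)`, where `P(D)` is the Fourier multiplier
with symbol `P`. -/
def heatMultiplierKernel (P : V → E) (t : ℝ) : V → E :=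
  𝓕⁻ fun ξ => Real.exp (-(4 * π ^ 2 * t * ‖ξ‖ ^ 2)) • P ξ

theorem contDiff_heatMultiplierKernel (ht : 0 < t) (hPm : AEStronglyMeasurable P)
    (hP : ∀ ξ, ‖P ξ‖ ≤ A * ‖ξ‖ ^ m) (N : ℕ∞) : ContDiff ℝ N (heatMultiplierKernel P t) :=
  contDiff_fourierInv fun k _ =>
    integrable_norm_pow_mul_norm_gaussian_smul (by positivity) hPm hP k

theorem fderiv_heatMultiplierKernel_apply (ht : 0 < t) (hPm : AEStronglyMeasurable P)
    (hP : ∀ ξ, ‖P ξ‖ ≤ A * ‖ξ‖ ^ m) (x v : V) :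
    fderiv ℝ (heatMultiplierKernel P t) x v =
      (2 * π * Complex.I) • heatMultiplierKernel (fun ξ => ⟪v, ξ⟫ • P ξ) t x := by
  have hb : 0 < 4 * π ^ 2 * t := by positivity
  simp only [heatMultiplierKernel, smul_comm (Real.exp _) ⟪v, _⟫]
  exact fderiv_fourierInv_apply (integrable_gaussian_smul hb hPm hP)
    (by simpa using integrable_norm_pow_mul_norm_gaussian_smul hb hPm hP 1) x v

theorem IsHomogeneousSymbol.heatMultiplierKernel_eq_smul (hP : IsHomogeneousSymbol P m)
    (ht : 0 < t) (x : V) :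
    heatMultiplierKernel P t x =
      (√t ^ (finrank ℝ V + m))⁻¹ • heatMultiplierKernel P 1 ((√t)⁻¹ • x) := by
  set r := √t
  have hr : 0 < r := Real.sqrt_pos.2 ht
  have hrt : r ^ 2 = t := Real.sq_sqrt ht.le
  simp only [heatMultiplierKernel, fourierInv_eq]
  have hscale := Measure.integral_comp_smul_of_nonneg volume (fun η : V =>
    𝐞 ⟪η, r⁻¹ • x⟫ • Real.exp (-(4 * π ^ 2 * 1 * ‖η‖ ^ 2)) • P η) r (hR := hr.le)
  rw [pow_add, mul_inv, mul_comm (r ^ finrank ℝ V)⁻¹, mul_smul, ← hscale, ← integral_smul]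
  congr with ξ
  have hinner : ⟪r • ξ, r⁻¹ • x⟫ = ⟪ξ, x⟫ := by
    rw [real_inner_smul_left, real_inner_smul_right, mul_inv_cancel_left₀ hr.ne']
  have hexp : 4 * π ^ 2 * 1 * ‖r • ξ‖ ^ 2 = 4 * π ^ 2 * t * ‖ξ‖ ^ 2 := by
    rw [norm_smul, mul_pow, norm_eq_abs, sq_abs, hrt]; ring
  rw [hinner, hexp, hP.map_smul r hr.le, smul_comm _ (r ^ m), smul_comm _ (r ^ m),
    inv_smul_smul₀ (pow_pos hr m).ne']

end HeatMultiplierKernel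

section ParabolicDecay

variable {V E : Type*} [NormedAddCommGroup V] [NormedAddCommGroup E] {K : ℝ → V → E} {d : ℕ}

/-- The family `K t`, `t > 0`, decays like `(√t + |x|)⁻ᵈ`, the natural size of a kernel that is
homogeneous of degree `-d` for the parabolic scaling `(t, x) ↦ (r²t, rx)`. -/
def HasParabolicDecay (d : ℕ) (K : ℝ → V → E) : Prop :=
  ∃ C, ∀ t > 0, ∀ x, ‖K t x‖ ≤ C * ((√t + ‖x‖) ^ d)⁻¹

namespace HasParabolicDecay

theorem const_smul {𝕜 : Type*} [NormedField 𝕜] [NormedSpace 𝕜 E] (h : HasParabolicDecay d K)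
    (c : 𝕜) : HasParabolicDecay d fun t x => c • K t x := by
  obtain ⟨C, hC⟩ := h
  refine ⟨‖c‖ * C, fun t ht x => ?_⟩
  rw [norm_smul, mul_assoc]
  gcongr
  exact hC t ht x

theorem congr {K' : ℝ → V → E} (h : HasParabolicDecay d K)
    (heq : ∀ t > 0, ∀ x, K' t x = K t x) : HasParabolicDecay d K' := by
  obtain ⟨C, hC⟩ := h
  exact ⟨C, fun t ht x => heq t ht x ▸ hC t ht x⟩

theorem exists_uniform {ι : Type*} [Finite ι] {K : ι → ℝ → V → E}
    (h : ∀ i, HasParabolicDecay d (K i)) :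
    ∃ C > 0, ∀ i, ∀ t > 0, ∀ x, ‖K i t x‖ ≤ C * ((√t + ‖x‖) ^ d)⁻¹ := by
  choose C hC using h
  obtain ⟨M, hM⟩ := Finite.exists_le C
  refine ⟨max M 1, by positivity, fun i t ht x => (hC i t ht x).trans ?_⟩
  gcongr
  exact (hM i).trans (le_max_left M 1)

end HasParabolicDecay

theorem hasDerivAt_neg_inv_sqrt_add_pow {a s : ℝ} (ha : 0 ≤ a) (hs : 0 < s) (hd : d ≠ 0) :
    HasDerivAt (fun u => -(2 / d * ((√u + a) ^ d)⁻¹)) ((√s)⁻¹ * ((√s + a) ^ (d + 1))⁻¹) s := by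
  have hpos : 0 < √s + a := by positivity
  obtain ⟨k, rfl⟩ := Nat.exists_eq_succ_of_ne_zero hd
  refine ((((((hasDerivAt_sqrt hs.ne').add_const a).pow _).inv
    (pow_pos hpos _).ne').const_mul _).neg).congr_deriv ?_
  have := Real.sqrt_pos.2 hs
  simp only [Nat.succ_eq_add_one, Nat.add_sub_cancel, Pi.pow_apply]
  push_cast
  field_simp
  ring

theorem tendsto_neg_inv_sqrt_add_pow (a : ℝ) (hd : d ≠ 0) :
    Tendsto (fun u => -(2 / d * ((√u + a) ^ d)⁻¹)) atTop (𝓝 0) := by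
  have h : Tendsto (fun u => (√u + a) ^ d) atTop atTop :=
    (tendsto_pow_atTop hd).comp (tendsto_atTop_add_const_right _ a tendsto_sqrt_atTop)
  simpa using (h.inv_tendsto_atTop.const_mul (2 / d : ℝ)).neg

theorem inv_sqrt_add_pow_add_two_le {a s : ℝ} (ha : 0 ≤ a) (hs : 0 < s) :
    ((√s + a) ^ (d + 2))⁻¹ ≤ (√s)⁻¹ * ((√s + a) ^ (d + 1))⁻¹ := by
  rw [← mul_inv, pow_succ' _ (d + 1)]
  gcongr
  linarith

theorem integrableOn_Ioi_inv_sqrt_mul_inv_sqrt_add_pow {a t : ℝ} (ha : 0 ≤ a) (ht : 0 < t)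
    (hd : d ≠ 0) : IntegrableOn (fun s => (√s)⁻¹ * ((√s + a) ^ (d + 1))⁻¹) (Ioi t) :=
  integrableOn_Ioi_deriv_of_nonneg'
    (fun _ hs => hasDerivAt_neg_inv_sqrt_add_pow ha (ht.trans_le hs) hd)
    (fun _ _ => by positivity) (tendsto_neg_inv_sqrt_add_pow a hd)

theorem integrableOn_Ioi_inv_sqrt_add_pow {a t : ℝ} (ha : 0 ≤ a) (ht : 0 < t) (hd : d ≠ 0) :
    IntegrableOn (fun s => ((√s + a) ^ (d + 2))⁻¹) (Ioi t) :=
  (integrableOn_Ioi_inv_sqrt_mul_inv_sqrt_add_pow ha ht hd).mono' (by fun_prop) <|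
    (ae_restrict_mem measurableSet_Ioi).mono fun s hs => by
      rw [norm_of_nonneg (by positivity)]
      exact inv_sqrt_add_pow_add_two_le ha (ht.trans hs)

-- The larger integrand `(√s)⁻¹ (√s + a)⁻⁽ᵈ⁺¹⁾` is used because it has an explicit primitive.
theorem integral_Ioi_inv_sqrt_add_pow_le {a t : ℝ} (ha : 0 ≤ a) (ht : 0 < t) (hd : d ≠ 0) :
    ∫ s in Ioi t, ((√s + a) ^ (d + 2))⁻¹ ≤ 2 / d * ((√t + a) ^ d)⁻¹ :=
  calc ∫ s in Ioi t, ((√s + a) ^ (d + 2))⁻¹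
      ≤ ∫ s in Ioi t, (√s)⁻¹ * ((√s + a) ^ (d + 1))⁻¹ :=
        setIntegral_mono_on (integrableOn_Ioi_inv_sqrt_add_pow ha ht hd)
          (integrableOn_Ioi_inv_sqrt_mul_inv_sqrt_add_pow ha ht hd) measurableSet_Ioi
          fun s hs => inv_sqrt_add_pow_add_two_le ha (ht.trans hs)
    _ = 2 / d * ((√t + a) ^ d)⁻¹ := by
        rw [integral_Ioi_of_hasDerivAt_of_nonneg'
          (fun s hs => hasDerivAt_neg_inv_sqrt_add_pow ha (ht.trans_le hs) hd)
          (fun s _ => by positivity) (tendsto_neg_inv_sqrt_add_pow a hd), zero_sub, neg_neg]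

theorem HasParabolicDecay.integral_Ioi [NormedSpace ℝ E] (h : HasParabolicDecay (d + 2) K)
    (hd : d ≠ 0) : HasParabolicDecay d fun t x => ∫ s in Ioi t, K s x := by
  obtain ⟨C, hC⟩ := h
  refine ⟨|C| * (2 / d), fun t ht x => ?_⟩
  have hint := integrableOn_Ioi_inv_sqrt_add_pow (norm_nonneg x) ht hd
  calc ‖∫ s in Ioi t, K s x‖ ≤ ∫ s in Ioi t, |C| * ((√s + ‖x‖) ^ (d + 2))⁻¹ :=
        norm_integral_le_of_norm_le (hint.const_mul _) <|
          (ae_restrict_mem measurableSet_Ioi).mono fun s hs =>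
            (hC s (ht.trans hs) x).trans (by gcongr; exact le_abs_self C)
    _ = |C| * ∫ s in Ioi t, ((√s + ‖x‖) ^ (d + 2))⁻¹ := integral_const_mul _ _
    _ ≤ |C| * (2 / d * ((√t + ‖x‖) ^ d)⁻¹) := by
        gcongr; exact integral_Ioi_inv_sqrt_add_pow_le (norm_nonneg x) ht hd
    _ = |C| * (2 / d) * ((√t + ‖x‖) ^ d)⁻¹ := by ring

end ParabolicDecay

theorem sqrt_add_eq_sqrt_mul_one_add {t : ℝ} (ht : 0 < t) (a : ℝ) :
    √t + a = √t * (1 + (√t)⁻¹ * a) := by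
  rw [mul_add, mul_one, mul_inv_cancel_left₀ (Real.sqrt_pos.2 ht).ne']

theorem IsHomogeneousSymbol.hasParabolicDecay_heatMultiplierKernel
    {V E : Type*} [NormedAddCommGroup V] [InnerProductSpace ℝ V] [FiniteDimensional ℝ V]
    [MeasurableSpace V] [BorelSpace V] [NormedAddCommGroup E] [NormedSpace ℂ E] {P : V → E} {m : ℕ}
    (hP : IsHomogeneousSymbol P m) :
    HasParabolicDecay (finrank ℝ V + m) (heatMultiplierKernel P) := by
  set d := finrank ℝ V + m
  have hb : 0 < 4 * π ^ 2 * 1 := by positivity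
  let G : 𝓢(V, E) := SchwartzMap.bilinLeftCLM (ContinuousLinearMap.lsmul ℝ ℝ)
    hP.hasTemperateGrowth (gaussianSchwartz V hb)
  have hG : heatMultiplierKernel P 1 = 𝓕⁻ G := (SchwartzMap.fourierInv_coe G).symm
  obtain ⟨C, hC⟩ : ∃ C, ∀ y, (1 + ‖y‖) ^ d * ‖heatMultiplierKernel P 1 y‖ ≤ C := ⟨_, fun y => by
    simpa only [hG, norm_iteratedFDeriv_zero] using
      SchwartzMap.one_add_le_sup_seminorm_apply (𝕜 := ℝ) (m := (d, 0)) le_rfl le_rfl (𝓕⁻ G) y⟩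
  refine ⟨C, fun t ht x => ?_⟩
  have hr : 0 < √t := Real.sqrt_pos.2 ht
  have hsplit : √t + ‖x‖ = √t * (1 + ‖(√t)⁻¹ • x‖) := by
    rw [norm_smul, norm_inv, norm_of_nonneg hr.le, sqrt_add_eq_sqrt_mul_one_add ht]
  rw [hP.heatMultiplierKernel_eq_smul ht, norm_smul, norm_inv, norm_pow, norm_of_nonneg hr.le,
    hsplit, mul_pow, mul_inv, mul_left_comm]
  gcongr
  rw [← div_eq_mul_inv, le_div_iff₀' (by positivity)]
  exact hC _

section Subordination

variable {V E : Type*} [NormedAddCommGroup V] [NormedAddCommGroup E]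
  {Q : V → E} {A t c : ℝ} {m : ℕ}

theorem integrableOn_Ioi_exp_neg_four_pi_sq_mul (hc : 0 < c) (t : ℝ) :
    IntegrableOn (fun s => Real.exp (-(4 * π ^ 2 * s * c))) (Ioi t) := by
  have h : -(4 * π ^ 2 * c) < 0 := neg_lt_zero.2 (by positivity)
  refine (integrableOn_exp_mul_Ioi h t).congr_fun (fun s _ => ?_) measurableSet_Ioi
  ring_nf

theorem integral_Ioi_exp_neg_four_pi_sq_mul (hc : 0 < c) (t : ℝ) :
    4 * π ^ 2 * ∫ s in Ioi t, Real.exp (-(4 * π ^ 2 * s * c)) =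
      c⁻¹ * Real.exp (-(4 * π ^ 2 * t * c)) := by
  have h : -(4 * π ^ 2 * c) < 0 := neg_lt_zero.2 (by positivity)
  have hcomm : ∀ s, -(4 * π ^ 2 * s * c) = -(4 * π ^ 2 * c) * s := fun s => by ring
  simp only [hcomm, integral_exp_mul_Ioi h]
  field_simp

theorem four_pi_sq_smul_integral_Ioi_exp_smul [NormedSpace ℝ E] [CompleteSpace E] (hQ₀ : Q 0 = 0)
    (t : ℝ) (ξ : V) :
    (4 * π ^ 2) • ∫ s in Ioi t, Real.exp (-(4 * π ^ 2 * s * ‖ξ‖ ^ 2)) • Q ξ =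
      Real.exp (-(4 * π ^ 2 * t * ‖ξ‖ ^ 2)) • (‖ξ‖ ^ 2)⁻¹ • Q ξ := by
  rcases eq_or_ne ξ 0 with rfl | hξ
  · simp [hQ₀]
  · have hξ' : 0 < ‖ξ‖ ^ 2 := by positivity
    rw [integral_smul_const, smul_smul, integral_Ioi_exp_neg_four_pi_sq_mul hξ', smul_smul,
      mul_comm]

theorem norm_inv_norm_sq_smul_le [NormedSpace ℝ E] {ξ : V} {y : E}
    (hy : ‖y‖ ≤ A * ‖ξ‖ ^ (m + 2)) : ‖(‖ξ‖ ^ 2)⁻¹ • y‖ ≤ |A| * ‖ξ‖ ^ m := by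
  rw [norm_smul, norm_inv, norm_pow, norm_norm]
  refine inv_mul_le_of_le_mul₀ (by positivity) (by positivity) (hy.trans ?_)
  rw [pow_add, mul_comm (‖ξ‖ ^ m), mul_left_comm]
  gcongr
  exact le_abs_self A

variable [InnerProductSpace ℝ V] [FiniteDimensional ℝ V] [MeasurableSpace V] [BorelSpace V]

theorem aestronglyMeasurable_inv_norm_sq_smul [NormedSpace ℝ E] (hQm : AEStronglyMeasurable Q) :
    AEStronglyMeasurable fun ξ => (‖ξ‖ ^ 2)⁻¹ • Q ξ :=
  (by fun_prop : Measurable fun ξ : V => (‖ξ‖ ^ 2)⁻¹).aestronglyMeasurable.smul hQm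

theorem integrable_prod_Ioi_exp_smul [NormedSpace ℝ E] (hQm : AEStronglyMeasurable Q)
    (hQ : ∀ ξ, ‖Q ξ‖ ≤ A * ‖ξ‖ ^ (m + 2)) (ht : 0 < t) :
    Integrable (fun p : V × ℝ => Real.exp (-(4 * π ^ 2 * p.2 * ‖p.1‖ ^ 2)) • Q p.1)
      (volume.prod (volume.restrict (Ioi t))) := by
  have hexp : Continuous fun p : V × ℝ => Real.exp (-(4 * π ^ 2 * p.2 * ‖p.1‖ ^ 2)) := by fun_prop
  have hmeas : AEStronglyMeasurable
      (fun p : V × ℝ => Real.exp (-(4 * π ^ 2 * p.2 * ‖p.1‖ ^ 2)) • Q p.1)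
      (volume.prod (volume.restrict (Ioi t))) := hexp.aestronglyMeasurable.smul hQm.comp_fst
  have hQ₀ : Q 0 = 0 := by simpa using hQ 0
  have hnorm (ξ : V) (s : ℝ) : ‖Real.exp (-(4 * π ^ 2 * s * ‖ξ‖ ^ 2)) • Q ξ‖ =
      Real.exp (-(4 * π ^ 2 * s * ‖ξ‖ ^ 2)) • ‖Q ξ‖ := by
    rw [norm_smul, norm_of_nonneg (Real.exp_nonneg _), smul_eq_mul]
  refine (integrable_prod_iff hmeas).2 ⟨Eventually.of_forall fun ξ => ?_, ?_⟩
  · rcases eq_or_ne ξ 0 with rfl | hξ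
    · simp [hQ₀]
    · have hξ' : 0 < ‖ξ‖ ^ 2 := by positivity
      exact (integrableOn_Ioi_exp_neg_four_pi_sq_mul hξ' t).smul_const (Q ξ)
  have hinner (ξ : V) : ∫ s in Ioi t, ‖Real.exp (-(4 * π ^ 2 * s * ‖ξ‖ ^ 2)) • Q ξ‖ =
      (4 * π ^ 2)⁻¹ • Real.exp (-(4 * π ^ 2 * t * ‖ξ‖ ^ 2)) • (‖ξ‖ ^ 2)⁻¹ • ‖Q ξ‖ := by
    simp only [hnorm]
    rw [eq_inv_smul_iff₀ (by positivity)]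
    exact four_pi_sq_smul_integral_Ioi_exp_smul (Q := fun ξ => ‖Q ξ‖) (by rw [hQ₀, norm_zero]) t ξ
  simp only [hinner]
  have hbound (ξ : V) : ‖(‖ξ‖ ^ 2)⁻¹ • ‖Q ξ‖‖ ≤ |A| * ‖ξ‖ ^ m :=
    norm_inv_norm_sq_smul_le ((norm_norm (Q ξ)).trans_le (hQ ξ))
  exact (integrable_gaussian_smul (by positivity)
    (aestronglyMeasurable_inv_norm_sq_smul hQm.norm) hbound).smul ((4 * π ^ 2)⁻¹ : ℝ)

theorem heatMultiplierKernel_inv_norm_sq_smul [NormedSpace ℂ E] [CompleteSpace E]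
    (hQm : AEStronglyMeasurable Q) (hQ : ∀ ξ, ‖Q ξ‖ ≤ A * ‖ξ‖ ^ (m + 2)) (ht : 0 < t) (x : V) :
    heatMultiplierKernel (fun ξ => (‖ξ‖ ^ 2)⁻¹ • Q ξ) t x =
      (4 * π ^ 2) • ∫ s in Ioi t, heatMultiplierKernel Q s x := by
  have hQ₀ : Q 0 = 0 := by simpa using hQ 0
  have hint : Integrable (fun p : V × ℝ =>
      𝐞 ⟪p.1, x⟫ • Real.exp (-(4 * π ^ 2 * p.2 * ‖p.1‖ ^ 2)) • Q p.1)
      (volume.prod (volume.restrict (Ioi t))) := by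
    refine (integrable_prod_Ioi_exp_smul hQm hQ ht).mono ?_ (Eventually.of_forall fun p => by
      rw [Circle.norm_smul])
    have hchar : Continuous fun p : V × ℝ => 𝐞 ⟪p.1, x⟫ := by fun_prop
    exact hchar.aestronglyMeasurable.smul (integrable_prod_Ioi_exp_smul hQm hQ ht).1
  simp only [heatMultiplierKernel, fourierInv_eq, ← four_pi_sq_smul_integral_Ioi_exp_smul hQ₀]
  rw [← integral_integral_swap hint, ← integral_smul]
  congr with ξ
  simp only [Circle.smul_def]
  rw [integral_smul, smul_comm]

end Subordination

theorem IsHomogeneousSymbol.hasParabolicDecay_heatMultiplierKernel_inv_norm_sq_smul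
    {V E : Type*} [NormedAddCommGroup V] [InnerProductSpace ℝ V] [FiniteDimensional ℝ V]
    [MeasurableSpace V] [BorelSpace V] [NormedAddCommGroup E] [NormedSpace ℂ E] [CompleteSpace E]
    {Q : V → E} {m : ℕ} (hQ : IsHomogeneousSymbol Q (m + 2)) (hd : finrank ℝ V + m ≠ 0) :
    HasParabolicDecay (finrank ℝ V + m) (heatMultiplierKernel fun ξ => (‖ξ‖ ^ 2)⁻¹ • Q ξ) := by
  obtain ⟨A, hA⟩ := hQ.exists_norm_le
  have hdecay : HasParabolicDecay (finrank ℝ V + m + 2) (heatMultiplierKernel Q) :=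
    hQ.hasParabolicDecay_heatMultiplierKernel
  exact ((hdecay.integral_Ioi hd).const_smul (4 * π ^ 2 : ℝ)).congr fun t ht x =>
    heatMultiplierKernel_inv_norm_sq_smul hQ.continuous.aestronglyMeasurable hA ht x

section Oseen

variable {n : ℕ} {t : ℝ}

/-- The numerator `δ_{jk} |ξ|² - ξ_j ξ_k` of the symbol of the Leray projection. -/
def lerayNumerator (j k : Fin n) (ξ : Rn n) : ℂ :=
  (((if j = k then 1 else 0) * ‖ξ‖ ^ 2 - ξ j * ξ k : ℝ) : ℂ)

theorem isHomogeneousSymbol_lerayNumerator (j k : Fin n) :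
    IsHomogeneousSymbol (lerayNumerator j k) 2 := by
  have hdiag : IsHomogeneousSymbol (fun ξ : Rn n => (if j = k then 1 else 0) * ‖ξ‖ ^ 2) 2 :=
    IsHomogeneousSymbol.norm_sq.clm_comp (ContinuousLinearMap.mul ℝ ℝ (if j = k then 1 else 0))
  have hprod : IsHomogeneousSymbol (fun ξ : Rn n => ξ j * ξ k) 2 :=
    (IsHomogeneousSymbol.clm (EuclideanSpace.proj j)).smul (.clm (EuclideanSpace.proj k))
  exact (hdiag.sub hprod).clm_comp Complex.ofRealCLM

theorem oseenKernel_eq_heatMultiplierKernel (t : ℝ) (j k : Fin n) :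
    oseenKernel n t j k = heatMultiplierKernel (fun ξ => (‖ξ‖ ^ 2)⁻¹ • lerayNumerator j k ξ) t := by
  have : Nonempty (Fin n) := ⟨j⟩
  ext x
  rw [oseenKernel, heatMultiplierKernel, fourierInv_eq']
  refine integral_congr_ae ((Measure.ae_ne volume (0 : Rn n)).mono fun ξ hξ => ?_)
  have hξ' : (‖ξ‖ : ℂ) ≠ 0 := by simpa using hξ
  simp only [lerayNumerator, real_inner_comm ξ x, Complex.real_smul, smul_eq_mul]
  push_cast
  field_simp

theorem exists_norm_inv_norm_sq_smul_lerayNumerator_le (j k : Fin n) :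
    ∃ A, ∀ ξ : Rn n, ‖(‖ξ‖ ^ 2)⁻¹ • lerayNumerator j k ξ‖ ≤ A * ‖ξ‖ ^ 0 := by
  obtain ⟨A, hA⟩ := (isHomogeneousSymbol_lerayNumerator j k).exists_norm_le
  exact ⟨|A|, fun ξ => norm_inv_norm_sq_smul_le (hA ξ)⟩

theorem aestronglyMeasurable_inv_norm_sq_smul_lerayNumerator (j k : Fin n) :
    AEStronglyMeasurable fun ξ : Rn n => (‖ξ‖ ^ 2)⁻¹ • lerayNumerator j k ξ :=
  aestronglyMeasurable_inv_norm_sq_smul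
    (isHomogeneousSymbol_lerayNumerator j k).continuous.aestronglyMeasurable

theorem contDiff_oseenKernel (ht : 0 < t) (j k : Fin n) (N : ℕ∞) :
    ContDiff ℝ N (oseenKernel n t j k) := by
  obtain ⟨A, hA⟩ := exists_norm_inv_norm_sq_smul_lerayNumerator_le j k
  rw [oseenKernel_eq_heatMultiplierKernel]
  exact contDiff_heatMultiplierKernel ht
    (aestronglyMeasurable_inv_norm_sq_smul_lerayNumerator j k) hA N

theorem pdiff_oseenKernel (ht : 0 < t) (j k l : Fin n) (x : Rn n) :
    pdiff l (oseenKernel n t j k) x = (2 * π * Complex.I) •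
      heatMultiplierKernel (fun ξ => (‖ξ‖ ^ 2)⁻¹ • ξ l • lerayNumerator j k ξ) t x := by
  obtain ⟨A, hA⟩ := exists_norm_inv_norm_sq_smul_lerayNumerator_le j k
  rw [pdiff, oseenKernel_eq_heatMultiplierKernel, fderiv_heatMultiplierKernel_apply ht
    (aestronglyMeasurable_inv_norm_sq_smul_lerayNumerator j k) hA]
  simp only [EuclideanSpace.inner_single_left, map_one, one_mul, smul_comm (_ : ℝ)⁻¹ (_ : ℝ)]

theorem hasParabolicDecay_oseenKernel (j k : Fin n) :
    HasParabolicDecay n fun t => oseenKernel n t j k := by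
  simpa only [oseenKernel_eq_heatMultiplierKernel, finrank_euclideanSpace_fin, add_zero] using
    (isHomogeneousSymbol_lerayNumerator j k).hasParabolicDecay_heatMultiplierKernel_inv_norm_sq_smul
      (m := 0) (by simpa using j.neZero.out)

theorem hasParabolicDecay_pdiff_oseenKernel (j k l : Fin n) :
    HasParabolicDecay (n + 1) fun t => pdiff l (oseenKernel n t j k) := by
  have hsymbol : IsHomogeneousSymbol (fun ξ : Rn n => ξ l • lerayNumerator j k ξ) (1 + 2) :=
    (IsHomogeneousSymbol.clm (EuclideanSpace.proj l)).smul (isHomogeneousSymbol_lerayNumerator j k)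
  have hdecay := hsymbol.hasParabolicDecay_heatMultiplierKernel_inv_norm_sq_smul (by simp)
  rw [finrank_euclideanSpace_fin] at hdecay
  exact (hdecay.const_smul (2 * π * Complex.I)).congr fun t ht => pdiff_oseenKernel ht j k l

end Oseen

theorem inv_sqrt_add_pow_eq {t y : ℝ} (ht : 0 < t) (hy : 0 ≤ y) (d : ℕ) :
    ((√t + y) ^ d)⁻¹ = t ^ (-(d : ℝ) / 2) * (1 + (√t)⁻¹ * y) ^ (-(d : ℝ)) := by
  rw [sqrt_add_eq_sqrt_mul_one_add ht, ← Real.rpow_natCast, ← Real.rpow_neg (by positivity),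
    Real.mul_rpow (Real.sqrt_nonneg t) (by positivity), Real.sqrt_eq_rpow, ← Real.rpow_mul ht.le,
    one_div_mul_eq_div]

/-- The Oseen kernel `K_t` is `C¹` and satisfies the polynomial bounds
`|∂^β K_t^{jk}(x)| ≤ C t^{-(n+|β|)/2} (1 + t^{-1/2}|x|)^{-n-|β|}` for `|β| ≤ 1`. -/
theorem oseen_kernel_estimates (n : ℕ) (hn : 2 ≤ n) :
    ∃ C > (0 : ℝ), ∀ t > (0 : ℝ), ∀ j k : Fin n,
      ContDiff ℝ 1 (oseenKernel n t j k) ∧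
      (∀ x : Rn n, ‖oseenKernel n t j k x‖ ≤
        C * t ^ (-(n : ℝ) / 2) * (1 + (Real.sqrt t)⁻¹ * ‖x‖) ^ (-(n : ℝ))) ∧
      (∀ l : Fin n, ∀ x : Rn n, ‖pdiff l (oseenKernel n t j k) x‖ ≤
        C * t ^ (-((n : ℝ) + 1) / 2) * (1 + (Real.sqrt t)⁻¹ * ‖x‖) ^ (-(n : ℝ) - 1)) := by
  obtain ⟨C₀, hC₀, hK⟩ := HasParabolicDecay.exists_uniform
    fun i : Fin n × Fin n => hasParabolicDecay_oseenKernel i.1 i.2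
  obtain ⟨C₁, -, hK'⟩ := HasParabolicDecay.exists_uniform
    fun i : Fin n × Fin n × Fin n => hasParabolicDecay_pdiff_oseenKernel i.1 i.2.1 i.2.2
  refine ⟨max C₀ C₁, lt_max_of_lt_left hC₀, fun t ht j k =>
    ⟨contDiff_oseenKernel ht j k 1, fun x => ?_, fun l x => ?_⟩⟩
  · rw [mul_assoc, ← inv_sqrt_add_pow_eq ht (norm_nonneg x)]
    exact (hK (j, k) t ht x).trans (by gcongr; exact le_max_left C₀ C₁)
  · rw [mul_assoc, ← neg_add', ← Nat.cast_add_one, ← inv_sqrt_add_pow_eq ht (norm_nonneg x)]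
    exact (hK' (j, k, l) t ht x).trans (by gcongr; exact le_max_right C₀ C₁)
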